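/- Let (X,d) be a nonempty metric space which is δ-hyperbolic for some real δ ≥ 0, weakly δ₀-geodesic for some real δ₀ ≥ 0, and uniformly locally finite, equipped with a metrically proper isometric action of a group G. Then there exist R ∈ ℕ and a real p₀ ≥ 1 such that for every real p ≥ p₀ there exists a map b : G → ℓ^p(X^{≤R}) which is a cocycle for the permutation representation π (i.e., b(gh) = b(g) + π(g)(b(h)) for all g,h ∈ G) and which is proper (for every M ≥ 0 the set {g ∈ G : ‖b(g)‖_p ≤ M} is finite). -/

import Mathlib

/-!
Hyperbolicity makes `exp (-ε (x|y)_a)` a quasi-ultrametric in `x`, `y` whose constant is small when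
`ε` is small, so by Frink's metrization argument it is within a factor of two of a pseudodistance
`d_a`. The `d_a` are permuted by isometries, and the cocycle is the formal coboundary
`b g (a, u) = d_a (g o, u) - d_a (o, u)`. Its value at `(a, u)` is at most `d_a (g o, o)`, which
decays like `exp (-ε d(a, o))`, whereas balls grow at most exponentially: hence `b g` is in `ℓ^p`
for large `p`. Conversely, if `a` lies between `o` and `g o` and `u` is reached from `a` by moving a
distance `R` towards `o`, then `d_a (o, u)` is small and `d_a (g o, u)` is not; there are at least
about `d(o, g o)` such pairs.
-/

open scoped NNReal ENNReal

section Summability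

theorem summable_comp_of_encard_fiber_le {α β : Type*} {f : β → ℝ} (hf : ∀ b, 0 ≤ f b)
    {g : α → β} {c : β → ℕ} (hc : ∀ b, (g ⁻¹' {b}).encard ≤ c b)
    (hsum : Summable fun b => c b * f b) : Summable fun a => f (g a) := by
  have hcard : ∀ b, {a | g a = b}.Finite ∧ Nat.card {a // g a = b} ≤ c b := fun b =>
    Set.encard_le_coe_iff_finite_ncard_le.1 (hc b)
  have : ∀ b, Finite {a // g a = b} := fun b => (hcard b).1
  have hfiber : ∀ (b : β) (a : {a // g a = b}), f (g (Equiv.sigmaFiberEquiv g ⟨b, a⟩)) = f b :=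
    fun b a => congrArg f a.2
  rw [← (Equiv.sigmaFiberEquiv g).summable_iff,
    summable_sigma_of_nonneg (f := (fun a => f (g a)) ∘ Equiv.sigmaFiberEquiv g) fun _ => hf _]
  refine ⟨fun b => Summable.of_finite, Summable.of_nonneg_of_le (fun b => ?_) (fun b => ?_) hsum⟩
  · exact tsum_nonneg fun _ => hf _
  · simp only [Function.comp_apply, hfiber, tsum_const, nsmul_eq_mul]
    exact mul_le_mul_of_nonneg_right (Nat.cast_le.2 (hcard b).2) (hf b)

theorem encard_biUnion_finset_le_mul {α β : Type*} (s : Finset α) {t : α → Set β} {K : ℕ}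
    (ht : ∀ a ∈ s, (t a).encard ≤ K) : (⋃ a ∈ s, t a).encard ≤ s.card * K := by
  classical
  induction s using Finset.induction_on with
  | empty => simp
  | insert a s ha ih =>
    rw [Finset.set_biUnion_insert, Finset.card_insert_of_notMem ha, Nat.cast_succ, add_mul, one_mul,
      add_comm]
    exact (Set.encard_union_le _ _).trans (add_le_add (ht a (Finset.mem_insert_self a s))
      (ih fun b hb => ht b (Finset.mem_insert_of_mem hb)))

theorem card_mul_rpow_le_lp_norm_rpow {ι κ : Type*} [Fintype κ] {E : ι → Type*}
    [∀ i, NormedAddCommGroup (E i)] {p : ℝ≥0∞} (hp : 0 < p.toReal) (f : lp E p) {q : κ → ι}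
    (hq : Function.Injective q) {c : ℝ} (hc : 0 ≤ c) (hf : ∀ k, c ≤ ‖f (q k)‖) :
    Fintype.card κ * c ^ p.toReal ≤ ‖f‖ ^ p.toReal :=
  calc Fintype.card κ * c ^ p.toReal = ∑ _k : κ, c ^ p.toReal := by
        rw [Finset.sum_const, nsmul_eq_mul, Finset.card_univ]
    _ ≤ ∑ k, ‖f (q k)‖ ^ p.toReal :=
        Finset.sum_le_sum fun k _ => Real.rpow_le_rpow hc (hf k) hp.le
    _ = ∑ i ∈ Finset.univ.map ⟨q, hq⟩, ‖f i‖ ^ p.toReal :=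
        (Finset.sum_map _ ⟨q, hq⟩ fun i => ‖f i‖ ^ p.toReal).symm
    _ ≤ ‖f‖ ^ p.toReal := lp.sum_rpow_le_norm_rpow hp f _

end Summability

section PreDist

theorem dist_ofPreNNDist_map_le {X Y : Type*} {d : X → X → ℝ≥0} {d' : Y → Y → ℝ≥0}
    (hd : ∀ x, d x x = 0) (hd' : ∀ y, d' y y = 0) (hcomm : ∀ x y, d x y = d y x)
    (hcomm' : ∀ x y, d' x y = d' y x) {φ : X → Y} (hφ : ∀ x y, d' (φ x) (φ y) ≤ d x y) (x y : X) :
    (PseudoMetricSpace.ofPreNNDist d' hd' hcomm').dist (φ x) (φ y) ≤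
      (PseudoMetricSpace.ofPreNNDist d hd hcomm).dist x y := by
  refine NNReal.coe_le_coe.2 (le_ciInf fun l => ?_)
  refine (ciInf_le (OrderBot.bddBelow _) (l.map φ)).trans ?_
  rw [← List.map_cons, ← List.map_singleton, ← List.map_append, List.zipWith_map,
    ← List.map_uncurry_zip_eq_zipWith, ← List.map_uncurry_zip_eq_zipWith]
  exact List.sum_le_sum fun q _ => hφ q.1 q.2

theorem le_two_mul_dist_ofPreNNDist_of_le_mul_max {X : Type*} {d : X → X → ℝ≥0}
    (hd : ∀ x, d x x = 0) (hcomm : ∀ x y, d x y = d y x) {c : ℝ≥0} (hc : c ^ 2 ≤ 2)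
    (hmax : ∀ x y z, d x z ≤ c * max (d x y) (d y z)) (x y : X) :
    d x y ≤ 2 * (PseudoMetricSpace.ofPreNNDist d hd hcomm).dist x y := by
  have hc2 : c ≤ 2 := by
    by_contra! h
    exact absurd hc (not_le.2 (by nlinarith))
  refine PseudoMetricSpace.le_two_mul_dist_ofPreNNDist d hd hcomm (fun x₁ x₂ x₃ x₄ => ?_) x y
  calc d x₁ x₄
      ≤ c * max (d x₁ x₂) (c * max (d x₂ x₃) (d x₃ x₄)) :=
        (hmax x₁ x₂ x₄).trans (by gcongr; exact hmax x₂ x₃ x₄)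
    _ = max (c * d x₁ x₂) (c ^ 2 * max (d x₂ x₃) (d x₃ x₄)) := by rw [mul_max, sq, mul_assoc]
    _ ≤ max (2 * d x₁ x₂) (2 * max (d x₂ x₃) (d x₃ x₄)) := by gcongr
    _ = 2 * max (d x₁ x₂) (max (d x₂ x₃) (d x₃ x₄)) := (mul_max ..).symm

end PreDist

section GromovProduct

variable {X : Type*} [PseudoMetricSpace X]

/-- The Gromov product `(x|y)_a` of `x` and `y` based at `a`. -/
noncomputable def gromovProduct (a x y : X) : ℝ :=
  (dist x a + dist y a - dist x y) / 2

theorem gromovProduct_comm (a x y : X) : gromovProduct a x y = gromovProduct a y x := by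
  rw [gromovProduct, gromovProduct, dist_comm x y, add_comm (dist x a)]

theorem gromovProduct_smul {G : Type*} [SMul G X] [IsIsometricSMul G X] (g : G) (a x y : X) :
    gromovProduct (g • a) (g • x) (g • y) = gromovProduct a x y := by
  simp only [gromovProduct, dist_smul]

theorem dist_sub_dist_le_gromovProduct (a x y : X) :
    dist y a - dist x y ≤ gromovProduct a x y := by
  rw [gromovProduct]
  linarith [dist_triangle_left y a x]

variable (X) in
/-- The four-point condition with constant `δ`. -/
def IsGromovHyperbolic (δ : ℝ) : Prop :=
  ∀ x₁ x₂ x₃ x₄ : X, dist x₁ x₄ + dist x₂ x₃ ≤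
    max (dist x₁ x₂ + dist x₃ x₄) (dist x₁ x₃ + dist x₂ x₄) + δ

variable (X) in
/-- The existence of coarse geodesics: every pair of points has points roughly between them at every
prescribed distance, up to an error `δ`. -/
def IsWeaklyGeodesic (δ : ℝ) : Prop :=
  ∀ x y : X, ∀ s : ℝ, 0 ≤ s → s ≤ dist x y + δ →
    ∃ z : X, dist x z ≤ s ∧ dist z y ≤ dist x y - s + δ

theorem IsGromovHyperbolic.nonneg {δ : ℝ} (hX : IsGromovHyperbolic X δ) (x : X) : 0 ≤ δ := by
  simpa only [dist_self, add_zero, max_self, zero_add] using hX x x x x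

theorem IsGromovHyperbolic.min_gromovProduct_sub_le {δ : ℝ} (hX : IsGromovHyperbolic X δ)
    (a x y z : X) :
    min (gromovProduct a x y) (gromovProduct a y z) - δ / 2 ≤ gromovProduct a x z := by
  have h := hX x y a z
  rw [← sub_le_iff_le_add, le_max_iff] at h
  rw [sub_le_iff_le_add, min_le_iff]
  unfold gromovProduct
  refine h.imp (fun h => ?_) fun h => ?_ <;> linarith [dist_comm a z]

/-- Here `a` lies at distance about `s` from `x` towards `y`, and `u` at distance about `R` from `a`
back towards `x`. -/
theorem IsWeaklyGeodesic.exists_gromovProduct_le {δ₀ : ℝ} (hX : IsWeaklyGeodesic X δ₀)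
    (hδ₀ : 0 ≤ δ₀) {R s : ℝ} (hR : δ₀ < R) (x y : X) (hRs : R ≤ s) (hs : s ≤ dist x y) :
    ∃ a u : X, dist a u ≤ R ∧ s - δ₀ ≤ dist x a ∧ dist x a ≤ s ∧ y ≠ u ∧
      R - δ₀ ≤ gromovProduct a x u ∧ gromovProduct a y u ≤ δ₀ := by
  obtain ⟨a, hxa, hay⟩ := hX x y s (by linarith) (by linarith)
  have hsa : s - δ₀ ≤ dist x a := by linarith [dist_triangle x a y]
  obtain ⟨u, hau, hux⟩ := hX a x R (by linarith) (by linarith [dist_comm a x])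
  have hyu : dist x y - s + R - δ₀ ≤ dist y u := by
    linarith [dist_triangle x u y, dist_comm u x, dist_comm u y, dist_comm a x]
  refine ⟨a, u, hau, hsa, hxa, ?_, ?_, ?_⟩
  · rintro rfl
    linarith [dist_self y]
  · unfold gromovProduct
    linarith [dist_triangle a u x, dist_comm u x, dist_comm a x, dist_comm u a]
  · unfold gromovProduct
    linarith [dist_comm y a, dist_comm u a]

end GromovProduct

section VisualDist

variable {X : Type*} [PseudoMetricSpace X]

open Classical in
/-- The function `exp (-ε (x|y)_a)`, set to zero on the diagonal. By hyperbolicity it is a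
quasi-ultrametric. -/
noncomputable def visualPreDist (ε : ℝ) (a x y : X) : ℝ≥0 :=
  if x = y then 0 else Real.toNNReal (Real.exp (-(ε * gromovProduct a x y)))

theorem visualPreDist_self (ε : ℝ) (a x : X) : visualPreDist ε a x x = 0 :=
  if_pos rfl

theorem visualPreDist_comm (ε : ℝ) (a x y : X) :
    visualPreDist ε a x y = visualPreDist ε a y x := by
  classical
  exact if_congr eq_comm rfl (by rw [gromovProduct_comm])

theorem coe_visualPreDist_of_ne (ε : ℝ) (a : X) {x y : X} (h : x ≠ y) :
    (visualPreDist ε a x y : ℝ) = Real.exp (-(ε * gromovProduct a x y)) := by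
  rw [visualPreDist, if_neg h, Real.coe_toNNReal _ (Real.exp_nonneg _)]

theorem coe_visualPreDist_le (ε : ℝ) (a x y : X) :
    (visualPreDist ε a x y : ℝ) ≤ Real.exp (-(ε * gromovProduct a x y)) := by
  obtain rfl | h := eq_or_ne x y
  · rw [visualPreDist_self]
    exact Real.exp_nonneg _
  · exact (coe_visualPreDist_of_ne ε a h).le

theorem visualPreDist_smul {G : Type*} [Group G] [MulAction G X] [IsIsometricSMul G X] (ε : ℝ)
    (g : G) (a x y : X) :
    visualPreDist ε (g • a) (g • x) (g • y) = visualPreDist ε a x y := by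
  classical
  exact if_congr (smul_left_cancel_iff g) rfl (by rw [gromovProduct_smul])

theorem IsGromovHyperbolic.visualPreDist_le_mul_max {δ ε : ℝ} (hX : IsGromovHyperbolic X δ)
    (hε : 0 ≤ ε) (a x y z : X) :
    visualPreDist ε a x z ≤
      Real.toNNReal (Real.exp (ε * (δ / 2))) *
        max (visualPreDist ε a x y) (visualPreDist ε a y z) := by
  have hone : 1 ≤ Real.toNNReal (Real.exp (ε * (δ / 2))) :=
    Real.one_le_toNNReal.2 (Real.one_le_exp (mul_nonneg hε (by linarith [hX.nonneg a])))
  obtain rfl | hxz := eq_or_ne x z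
  · simp only [visualPreDist_self, zero_le]
  obtain rfl | hxy := eq_or_ne x y
  · exact (le_max_right _ _).trans (le_mul_of_one_le_left' hone)
  obtain rfl | hyz := eq_or_ne y z
  · exact (le_max_left _ _).trans (le_mul_of_one_le_left' hone)
  rw [← NNReal.coe_le_coe, NNReal.coe_mul, NNReal.coe_max, coe_visualPreDist_of_ne ε a hxz,
    coe_visualPreDist_of_ne ε a hxy, coe_visualPreDist_of_ne ε a hyz,
    Real.coe_toNNReal _ (Real.exp_nonneg _), ← Real.exp_monotone.map_max, ← Real.exp_add,
    Real.exp_le_exp, max_neg_neg, ← mul_min_of_nonneg _ _ hε]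
  linarith [mul_le_mul_of_nonneg_left (hX.min_gromovProduct_sub_le a x y z) hε]

/-- The visual pseudodistance on `X` seen from `a`: the largest one below `visualPreDist`. -/
noncomputable abbrev visualMetric (ε : ℝ) (a : X) : PseudoMetricSpace X :=
  .ofPreNNDist (visualPreDist ε a) (visualPreDist_self ε a) (visualPreDist_comm ε a)

/-- The distance of `visualMetric`. -/
noncomputable def visualDist (ε : ℝ) (a x y : X) : ℝ :=
  (visualMetric ε a).dist x y

theorem visualDist_le_exp (ε : ℝ) (a x y : X) :
    visualDist ε a x y ≤ Real.exp (-(ε * gromovProduct a x y)) :=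
  (PseudoMetricSpace.dist_ofPreNNDist_le _ (visualPreDist_self ε a)
    (visualPreDist_comm ε a) x y).trans (coe_visualPreDist_le ε a x y)

theorem IsGromovHyperbolic.exp_le_two_mul_visualDist {δ ε : ℝ} (hX : IsGromovHyperbolic X δ)
    (hε : 0 ≤ ε) (hεδ : Real.exp (ε * δ) ≤ 2) (a : X) {x y : X} (hxy : x ≠ y) :
    Real.exp (-(ε * gromovProduct a x y)) ≤ 2 * visualDist ε a x y := by
  rw [← coe_visualPreDist_of_ne ε a hxy]
  refine le_two_mul_dist_ofPreNNDist_of_le_mul_max _ _ ?_ (hX.visualPreDist_le_mul_max hε a) x y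
  rw [← Real.toNNReal_pow (Real.exp_nonneg _), ← Real.exp_nat_mul, Real.toNNReal_le_iff_le_coe]
  convert hεδ using 2
  · push_cast
    ring
  · rfl

theorem abs_visualDist_sub_le (ε : ℝ) (a x y u : X) :
    |visualDist ε a x u - visualDist ε a y u| ≤ visualDist ε a x y :=
  @abs_dist_sub_le X (visualMetric ε a) x y u

theorem visualDist_smul {G : Type*} [Group G] [MulAction G X] [IsIsometricSMul G X] (ε : ℝ)
    (g : G) (a x y : X) : visualDist ε (g • a) (g • x) (g • y) = visualDist ε a x y := by
  have hle : ∀ (h : G) (a x y : X),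
      visualDist ε (h • a) (h • x) (h • y) ≤ visualDist ε a x y := fun h a =>
    dist_ofPreNNDist_map_le _ _ _ _ fun x y => (visualPreDist_smul ε h a x y).le
  refine (hle g a x y).antisymm ?_
  simpa only [inv_smul_smul] using hle g⁻¹ (g • a) (g • x) (g • y)

end VisualDist

/-- The set `X^{≤R}` of pairs of points at distance at most `R`. -/
abbrev BoundedPair (X : Type*) [PseudoMetricSpace X] (R : ℝ) : Type _ :=
  {q : X × X // dist q.1 q.2 ≤ R}

instance {X G : Type*} [PseudoMetricSpace X] [Monoid G] [MulAction G X] [IsIsometricSMul G X]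
    (R : ℝ) : MulAction G (BoundedPair X R) where
  smul g q := ⟨(g • q.1.1, g • q.1.2), (dist_smul g _ _).trans_le q.2⟩
  one_smul q := Subtype.ext (one_smul G q.1)
  mul_smul g h q := Subtype.ext (mul_smul g h q.1)

section Growth

variable {X : Type*} [PseudoMetricSpace X] {δ₀ : ℝ} {K : ℕ}

theorem IsWeaklyGeodesic.encard_closedBall_le_pow (hX : IsWeaklyGeodesic X δ₀) (hδ₀ : 0 ≤ δ₀)
    (hK : ∀ x : X, (Metric.closedBall x (1 + δ₀)).encard ≤ K) (o : X) (n : ℕ) :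
    (Metric.closedBall o n).encard ≤ (K ^ (n + 1) : ℕ) := by
  induction n with
  | zero =>
    rw [zero_add, pow_one]
    refine (Set.encard_le_encard (Metric.closedBall_subset_closedBall ?_)).trans (hK o)
    rw [Nat.cast_zero]
    positivity
  | succ n ih =>
    obtain ⟨hfin, hcard⟩ := Set.encard_le_coe_iff_finite_ncard_le.1 ih
    rw [Set.ncard_eq_toFinset_card _ hfin] at hcard
    have hcover : Metric.closedBall o (n + 1 : ℕ) ⊆
        ⋃ z ∈ hfin.toFinset, Metric.closedBall z (1 + δ₀) := by
      intro y hy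
      rw [Metric.mem_closedBall', Nat.cast_succ] at hy
      obtain ⟨z, hoz, hzy⟩ := hX o y (min n (dist o y)) (by positivity)
        ((min_le_right _ _).trans (le_add_of_nonneg_right hδ₀))
      refine Set.mem_biUnion (x := z) ?_ ?_
      · rw [SetLike.mem_coe, Set.Finite.mem_toFinset, Metric.mem_closedBall']
        exact hoz.trans (min_le_left _ _)
      · rw [Metric.mem_closedBall']
        linarith [le_min (show dist o y - 1 ≤ n by linarith) (sub_le_self (dist o y) zero_le_one)]
    calc (Metric.closedBall o (n + 1 : ℕ)).encard
        ≤ (⋃ z ∈ hfin.toFinset, Metric.closedBall z (1 + δ₀)).encard :=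
          Set.encard_le_encard hcover
      _ ≤ hfin.toFinset.card * K := encard_biUnion_finset_le_mul _ fun z _ => hK z
      _ ≤ (K ^ (n + 1 + 1) : ℕ) := by
          rw [pow_succ]
          exact_mod_cast Nat.mul_le_mul_right K hcard

theorem IsWeaklyGeodesic.summable_exp_neg_mul_dist (hX : IsWeaklyGeodesic X δ₀) (hδ₀ : 0 ≤ δ₀)
    (hK : ∀ x : X, (Metric.closedBall x (1 + δ₀)).encard ≤ K) {t : ℝ} (ht : 0 ≤ t)
    (hKt : K * Real.exp (-t) < 1) (o : X) : Summable fun x => Real.exp (-(t * dist x o)) := by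
  have hgeom : Summable fun n : ℕ => ((K ^ (n + 2) : ℕ) : ℝ) * Real.exp (-t) ^ n := by
    refine ((summable_geometric_of_lt_one (by positivity) hKt).mul_left ((K : ℝ) ^ 2)).congr
      fun n => ?_
    rw [mul_pow]
    push_cast
    ring
  have hfiber : ∀ n : ℕ, ((fun x => ⌊dist x o⌋₊) ⁻¹' {n}).encard ≤ (K ^ (n + 2) : ℕ) := by
    refine fun n => (Set.encard_le_encard ?_).trans
      (hX.encard_closedBall_le_pow hδ₀ hK o (n + 1))
    rintro x rfl
    rw [Metric.mem_closedBall, Nat.cast_succ]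
    exact (Nat.lt_floor_add_one _).le
  refine Summable.of_nonneg_of_le (fun x => Real.exp_nonneg _) (fun x => ?_)
    (summable_comp_of_encard_fiber_le (fun n => by positivity) hfiber hgeom)
  rw [← Real.exp_nat_mul, Real.exp_le_exp, mul_neg, mul_comm, neg_le_neg_iff]
  exact mul_le_mul_of_nonneg_right (Nat.floor_le dist_nonneg) ht

theorem encard_boundedPair_fst_fiber_le (R : ℝ) (a : X) :
    ((fun q : BoundedPair X R => q.1.1) ⁻¹' {a}).encard ≤ (Metric.closedBall a R).encard := by
  refine Set.encard_le_encard_of_injOn (f := fun q => q.1.2) ?_ ?_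
  · rintro q rfl
    exact Metric.mem_closedBall'.2 q.2
  · intro q hq q' hq' h
    exact Subtype.ext (Prod.ext (Eq.trans hq (Eq.symm hq')) h)

theorem IsWeaklyGeodesic.summable_exp_neg_mul_dist_fst (hX : IsWeaklyGeodesic X δ₀) (hδ₀ : 0 ≤ δ₀)
    (hK : ∀ x : X, (Metric.closedBall x (1 + δ₀)).encard ≤ K) {t : ℝ} (ht : 0 ≤ t)
    (hKt : K * Real.exp (-t) < 1) (R : ℕ) (o : X) :
    Summable fun q : BoundedPair X R => Real.exp (-(t * dist q.1.1 o)) := by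
  have hfiber : ∀ a : X, ((fun q : BoundedPair X R => q.1.1) ⁻¹' {a}).encard ≤
      (K ^ (R + 1) : ℕ) := fun a =>
    (encard_boundedPair_fst_fiber_le R a).trans (hX.encard_closedBall_le_pow hδ₀ hK a R)
  exact summable_comp_of_encard_fiber_le (f := fun x => Real.exp (-(t * dist x o)))
    (fun _ => Real.exp_nonneg _) hfiber ((hX.summable_exp_neg_mul_dist hδ₀ hK ht hKt o).mul_left _)

end Growth

section VisualFun

variable {X : Type*} [PseudoMetricSpace X]

/-- The function `(a, u) ↦ d_a (x, u)` on `X^{≤R}`. It need not be in `ℓ^p`, but for large `p`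
differences of two such functions are, and the cocycle is the formal coboundary
of `visualFun ε o`. -/
noncomputable def visualFun {R : ℝ} (ε : ℝ) (x : X) (q : BoundedPair X R) : ℝ :=
  visualDist ε q.1.1 x q.1.2

theorem visualFun_inv_smul {G : Type*} [Group G] [MulAction G X] [IsIsometricSMul G X] {R : ℝ}
    (ε : ℝ) (g : G) (x : X) (q : BoundedPair X R) :
    visualFun ε x (g⁻¹ • q) = visualFun ε (g • x) q := by
  have h := visualDist_smul ε g⁻¹ q.1.1 (g • x) q.1.2
  rwa [inv_smul_smul] at h

theorem abs_visualFun_sub_le {R ε : ℝ} (hε : 0 ≤ ε) (x y : X) (q : BoundedPair X R) :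
    |visualFun ε x q - visualFun ε y q| ≤
      Real.exp (ε * dist x y) * Real.exp (-(ε * dist q.1.1 y)) := by
  refine ((abs_visualDist_sub_le ε _ x y _).trans (visualDist_le_exp ε _ x y)).trans ?_
  rw [← Real.exp_add, Real.exp_le_exp, dist_comm q.1.1]
  linarith [mul_le_mul_of_nonneg_left (dist_sub_dist_le_gromovProduct q.1.1 x y) hε]

theorem IsWeaklyGeodesic.memℓp_visualFun_sub {δ₀ ε : ℝ} {K : ℕ} {p : ℝ≥0∞}
    (hX : IsWeaklyGeodesic X δ₀) (hδ₀ : 0 ≤ δ₀)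
    (hK : ∀ x : X, (Metric.closedBall x (1 + δ₀)).encard ≤ K) (hε : 0 ≤ ε)
    (hKp : K * Real.exp (-(ε * p.toReal)) < 1) (R : ℕ) (x y : X) :
    Memℓp (fun q : BoundedPair X R => visualFun ε x q - visualFun ε y q) p := by
  refine memℓp_gen (Summable.of_nonneg_of_le (fun q => by positivity) (fun q => ?_)
    ((hX.summable_exp_neg_mul_dist_fst hδ₀ hK (by positivity) hKp R y).mul_left
      (Real.exp (ε * dist x y * p.toReal))))
  calc ‖visualFun ε x q - visualFun ε y q‖ ^ p.toReal
      ≤ (Real.exp (ε * dist x y) * Real.exp (-(ε * dist q.1.1 y))) ^ p.toReal :=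
        Real.rpow_le_rpow (norm_nonneg _) (abs_visualFun_sub_le hε x y q) ENNReal.toReal_nonneg
    _ = Real.exp (ε * dist x y * p.toReal) * Real.exp (-(ε * p.toReal * dist q.1.1 y)) := by
        rw [← Real.exp_add, ← Real.exp_add, ← Real.exp_mul]
        ring_nf

variable {δ δ₀ ε : ℝ}

theorem exists_boundedPair_le_visualFun_sub (hhyp : IsGromovHyperbolic X δ)
    (hgeo : IsWeaklyGeodesic X δ₀) (hδ₀ : 0 ≤ δ₀) (hε : 0 ≤ ε) (hεδ : Real.exp (ε * δ) ≤ 2)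
    {R s : ℝ} (hR : δ₀ < R) (x y : X) (hRs : R ≤ s) (hs : s ≤ dist x y) :
    ∃ q : BoundedPair X R, s - δ₀ ≤ dist x q.1.1 ∧ dist x q.1.1 ≤ s ∧
      Real.exp (-(ε * δ₀)) / 2 - Real.exp (-(ε * (R - δ₀))) ≤
        visualFun ε y q - visualFun ε x q := by
  obtain ⟨a, u, hau, hsa, has, hyu, hxu_prod, hyu_prod⟩ :=
    hgeo.exists_gromovProduct_le hδ₀ hR x y hRs hs
  have hnear : visualDist ε a x u ≤ Real.exp (-(ε * (R - δ₀))) :=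
    (visualDist_le_exp ε a x u).trans (by gcongr)
  have hfar : Real.exp (-(ε * δ₀)) ≤ 2 * visualDist ε a y u :=
    le_trans (by gcongr) (hhyp.exp_le_two_mul_visualDist hε hεδ a hyu)
  refine ⟨⟨(a, u), hau⟩, hsa, has, ?_⟩
  unfold visualFun
  linarith

theorem exists_injective_le_visualFun_sub (hhyp : IsGromovHyperbolic X δ)
    (hgeo : IsWeaklyGeodesic X δ₀) (hδ₀ : 0 ≤ δ₀) (hε : 0 ≤ ε) (hεδ : Real.exp (ε * δ) ≤ 2)
    {R : ℝ} (hR : δ₀ < R) (x y : X) :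
    ∃ q : Fin ⌈(dist x y - R) / (δ₀ + 1)⌉₊ → BoundedPair X R, Function.Injective q ∧ ∀ k,
      Real.exp (-(ε * δ₀)) / 2 - Real.exp (-(ε * (R - δ₀))) ≤
        visualFun ε y (q k) - visualFun ε x (q k) := by
  have hpos : 0 < δ₀ + 1 := by positivity
  have hle (k : Fin ⌈(dist x y - R) / (δ₀ + 1)⌉₊) : R + k * (δ₀ + 1) ≤ dist x y := by
    linarith [(lt_div_iff₀ hpos).1 (Nat.lt_ceil.1 k.2)]
  choose q hlower hupper hsep using fun k =>
    exists_boundedPair_le_visualFun_sub hhyp hgeo hδ₀ hε hεδ hR x y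
      (le_add_of_nonneg_right (by positivity)) (hle k)
  have hmono : StrictMono fun k => dist x (q k).1.1 := fun j k hjk => by
    have hjk' : (j : ℝ) + 1 ≤ k := by exact_mod_cast hjk
    linarith [hupper j, hlower k, mul_le_mul_of_nonneg_right hjk' hpos.le]
  exact ⟨q, .of_comp (f := fun q : BoundedPair X R => dist x q.1.1) hmono.injective, hsep⟩

theorem div_mul_rpow_le_norm_visualFun_sub_rpow (hhyp : IsGromovHyperbolic X δ)
    (hgeo : IsWeaklyGeodesic X δ₀) (hδ₀ : 0 ≤ δ₀) (hε : 0 ≤ ε) (hεδ : Real.exp (ε * δ) ≤ 2)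
    {R c : ℝ} (hR : δ₀ < R) (hc : 0 ≤ c)
    (hcR : c ≤ Real.exp (-(ε * δ₀)) / 2 - Real.exp (-(ε * (R - δ₀)))) {p : ℝ≥0∞}
    (hp : 0 < p.toReal) {x y : X} {f : lp (fun _ : BoundedPair X R => ℝ) p}
    (hf : ∀ q, f q = visualFun ε y q - visualFun ε x q) :
    (dist x y - R) / (δ₀ + 1) * c ^ p.toReal ≤ ‖f‖ ^ p.toReal := by
  obtain ⟨q, hq, hsep⟩ := exists_injective_le_visualFun_sub hhyp hgeo hδ₀ hε hεδ hR x y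
  refine le_trans ?_ (card_mul_rpow_le_lp_norm_rpow hp f hq hc fun k => ?_)
  · rw [Fintype.card_fin]
    gcongr
    exact Nat.le_ceil _
  · rw [hf]
    exact (hcR.trans (hsep k)).trans (le_abs_self _)

end VisualFun

section Constants

theorem exists_pos_exp_mul_le_two {δ : ℝ} (hδ : 0 ≤ δ) : ∃ ε > 0, Real.exp (ε * δ) ≤ 2 := by
  refine ⟨Real.log 2 / (δ + 1), div_pos (Real.log_pos one_lt_two) (by positivity), ?_⟩
  rw [← Real.le_log_iff_exp_le two_pos, div_mul_eq_mul_div, div_le_iff₀ (by positivity)]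
  linarith [Real.log_pos one_lt_two]

theorem exists_nat_exp_lt_exp_half {δ₀ ε : ℝ} (hδ₀ : 0 ≤ δ₀) (hε : 0 < ε) :
    ∃ R : ℕ, δ₀ < R ∧ Real.exp (-(ε * (R - δ₀))) < Real.exp (-(ε * δ₀)) / 2 := by
  obtain ⟨R, hR⟩ := exists_nat_ge (2 * δ₀ + 1 / ε)
  have hinv : 0 < 1 / ε := one_div_pos.2 hε
  have hone : 1 ≤ (R - 2 * δ₀) * ε := (div_le_iff₀ hε).1 (by linarith)
  refine ⟨R, by linarith, ?_⟩
  rw [lt_div_iff₀ two_pos]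
  calc Real.exp (-(ε * (R - δ₀))) * 2
      < Real.exp (-(ε * (R - δ₀))) * Real.exp 1 := by
        gcongr
        linarith [Real.exp_one_gt_d9]
    _ ≤ Real.exp (-(ε * δ₀)) := by
        rw [← Real.exp_add, Real.exp_le_exp]
        linarith

theorem mul_exp_neg_lt_one_of_le {K t : ℝ} (hK : K ≤ t) : K * Real.exp (-t) < 1 := by
  rw [Real.exp_neg, ← div_eq_mul_inv, div_lt_one (Real.exp_pos t)]
  linarith [Real.add_one_le_exp t]

end Constants

theorem exists_proper_lp_cocycle_hyperbolic_general {X G : Type*} [PseudoMetricSpace X] [Group G]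
    [MulAction G X] [IsIsometricSMul G X] {δ δ₀ : ℝ} {K : ℕ} (hhyp : IsGromovHyperbolic X δ)
    (hgeo : IsWeaklyGeodesic X δ₀) (hδ₀ : 0 ≤ δ₀)
    (hK : ∀ x : X, (Metric.closedBall x (1 + δ₀)).encard ≤ K) (o : X) :
    ∃ R : ℕ, ∃ p₀ : ℝ, 1 ≤ p₀ ∧ ∀ p : ℝ, p₀ ≤ p →
      ∃ b : G → lp (fun _ : BoundedPair X R => ℝ) (ENNReal.ofReal p),
        (∀ g h q, b (g * h) q = b g q + b h (g⁻¹ • q)) ∧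
        ∃ c > 0, ∀ g, dist o (g • o) ≤ c * ‖b g‖ ^ p + R := by
  obtain ⟨ε, hε, hεδ⟩ := exists_pos_exp_mul_le_two (hhyp.nonneg o)
  obtain ⟨R, hR, hgap⟩ := exists_nat_exp_lt_exp_half hδ₀ hε
  refine ⟨R, max 1 (K / ε), le_max_left _ _, fun p hp => ?_⟩
  obtain ⟨hp_one, hp_ge⟩ := max_le_iff.1 hp
  have hp_pos : 0 < p := by linarith
  have htoReal : (ENNReal.ofReal p).toReal = p := ENNReal.toReal_ofReal hp_pos.le
  have hKp : K * Real.exp (-(ε * (ENNReal.ofReal p).toReal)) < 1 := by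
    rw [htoReal]
    exact mul_exp_neg_lt_one_of_le ((div_le_iff₀' hε).1 hp_ge)
  let b (g : G) : lp (fun _ : BoundedPair X R => ℝ) (ENNReal.ofReal p) :=
    ⟨_, hgeo.memℓp_visualFun_sub hδ₀ hK hε.le hKp R (g • o) o⟩
  refine ⟨b, fun g h q => ?_, ?_⟩
  · change visualFun ε ((g * h) • o) q - visualFun ε o q =
      visualFun ε (g • o) q - visualFun ε o q +
        (visualFun ε (h • o) (g⁻¹ • q) - visualFun ε o (g⁻¹ • q))
    rw [visualFun_inv_smul, visualFun_inv_smul, mul_smul, sub_add_sub_cancel']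
  · set c := Real.exp (-(ε * δ₀)) / 2 - Real.exp (-(ε * (R - δ₀))) with hc
    have hc_pos : 0 < c := sub_pos.2 hgap
    refine ⟨(δ₀ + 1) / c ^ p, by positivity, fun g => ?_⟩
    have hlower := div_mul_rpow_le_norm_visualFun_sub_rpow hhyp hgeo hδ₀ hε.le hεδ hR hc_pos.le
      hc.le (by rwa [htoReal]) (f := b g) fun _ => rfl
    rw [htoReal, div_mul_eq_mul_div, div_le_iff₀ (by positivity)] at hlower
    rw [← sub_le_iff_le_add, div_mul_eq_mul_div, le_div_iff₀ (by positivity)]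
    linarith

/-- Corollary 5.3 of Alvarez–Lafforgue (Yu). A group `G` acting isometrically and
metrically properly on a nonempty δ-hyperbolic, weakly δ₀-geodesic, uniformly locally
finite metric space `(X, d)` admits, for some `R : ℕ` and all sufficiently large real
`p`, a proper cocycle `b : G → ℓ^p(X^{≤R})` for the permutation representation. -/
theorem exists_proper_lp_cocycle_hyperbolic
    {X : Type*} [MetricSpace X] [Nonempty X] {G : Type*} [Group G] [MulAction G X]
    (δ : ℝ) (hδ : 0 ≤ δ)
    (hhyp : ∀ x₁ x₂ x₃ x₄ : X, dist x₁ x₄ + dist x₂ x₃ ≤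
      max (dist x₁ x₂ + dist x₃ x₄) (dist x₁ x₃ + dist x₂ x₄) + δ)
    (δ₀ : ℝ) (hδ₀ : 0 ≤ δ₀)
    (hwgeo : ∀ x y : X, ∀ s : ℝ, 0 ≤ s → s ≤ dist x y + δ₀ →
      ∃ z : X, dist x z ≤ s ∧ dist z y ≤ dist x y - s + δ₀)
    (hulf : ∀ r : ℝ, ∃ K : ℕ, ∀ x : X,
      (Metric.closedBall x r).Finite ∧ Nat.card (Metric.closedBall x r) ≤ K)
    (hiso : ∀ (g : G) (x y : X), dist (g • x) (g • y) = dist x y)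
    (hproper : ∀ (o : X) (M : ℝ), {g : G | dist o (g • o) ≤ M}.Finite) :
    ∃ R : ℕ, ∃ p₀ : ℝ, 1 ≤ p₀ ∧ ∀ p : ℝ, p₀ ≤ p →
      ∃ b : G → lp (fun _ : {q : X × X // dist q.1 q.2 ≤ (R : ℝ)} => ℝ)
          (ENNReal.ofReal p),
        -- cocycle identity `b (g h) = b g + π g (b h)` where `(π g f) (x, y) = f (g⁻¹ x, g⁻¹ y)`
        (∀ g h : G, ∀ q : {q : X × X // dist q.1 q.2 ≤ (R : ℝ)},
          (b (g * h) : _ → ℝ) q = (b g : _ → ℝ) q +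
            (b h : _ → ℝ) ⟨(g⁻¹ • q.val.1, g⁻¹ • q.val.2), by
              rw [hiso]; exact q.property⟩) ∧
        -- properness of the cocycle
        (∀ M : ℝ, 0 ≤ M → {g : G | ‖b g‖ ≤ M}.Finite) := by
  have : IsIsometricSMul G X := ⟨fun g => Isometry.of_dist_eq (hiso g)⟩
  obtain ⟨o⟩ := ‹Nonempty X›
  obtain ⟨K, hK⟩ := hulf (1 + δ₀)
  obtain ⟨R, p₀, hp₀, hb⟩ := exists_proper_lp_cocycle_hyperbolic_general (G := G) hhyp hwgeo hδ₀
    (fun x => Set.encard_le_coe_iff_finite_ncard_le.2 (hK x)) o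
  refine ⟨R, p₀, hp₀, fun p hp => ?_⟩
  obtain ⟨b, hcocycle, c, hc, hdist⟩ := hb p hp
  refine ⟨b, hcocycle, fun M _ => (hproper o (c * M ^ p + R)).subset fun g hg => ?_⟩
  have hMp : ‖b g‖ ^ p ≤ M ^ p := Real.rpow_le_rpow (lp.norm_nonneg' _) hg (by linarith)
  exact (hdist g).trans (by gcongr)
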